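/- Let M, f : I → ℝ be differentiable on an open interval I with M(r) > 0 and f(r) < 0 for all r, and let η : J × I → (0, 2π) be differentiable in r satisfying η(t,r) - sin η(t,r) = ((-f(r))^{3/2}/M(r))·t for all (t,r). Define R(t,r) = (M(r)/(-f(r)))·(1 - cos η(t,r)) and Ṙ = ∂R/∂t = (-f)^{1/2}·sin η/(1 - cos η). Then the partial derivative R' = ∂R/∂r satisfies R' = (M'/M - f'/f)·R + (-t·Ṙ)·(M'/M - (3/2)·f'/f) at every point where 1 - cos η ≠ 0. -/

import Mathlib

/-!
Differentiating `R = (M/(-f))(1 - cos η)` in `r` gives `(M'/M - f'/f) R + (M/(-f)) sin η · η'`.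
Differentiating the constraint `η - sin η = ((-f)^(3/2)/M) t`, which holds on a neighbourhood of `r`
because `I` is open, gives `(1 - cos η) η' = ((-f)^(3/2)/M) t ((3/2) f'/f - M'/M)`. Solving for `η'`
and writing everything in terms of `s = √(-f)` turns the second term into
`-t Ṙ (M'/M - (3/2) f'/f)`.
-/


/-- The paper's identity for `R' = ∂R/∂r` in the closed LTB model: with `M > 0`, `f < 0`
differentiable on an open set `I`, `η(t,·)` differentiable solving
`η - sin η = ((-f)^(3/2)/M)·t` with values in `(0, 2π)`,
`R(t,r) = (M/(-f))(1 - cos η)` and `Ṙ(t,r) = √(-f)·sin η/(1 - cos η)`, one has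
`R' = (M'/M - f'/f)·R + (-t·Ṙ)·(M'/M - (3/2)·f'/f)` wherever `1 - cos η ≠ 0`. -/
theorem ltb_Rprime_identity (I J : Set ℝ) (hI : IsOpen I) (hJ : IsOpen J)
    (M f : ℝ → ℝ)
    (hMdiff : ∀ r ∈ I, DifferentiableAt ℝ M r)
    (hfdiff : ∀ r ∈ I, DifferentiableAt ℝ f r)
    (hMpos : ∀ r ∈ I, 0 < M r) (hfneg : ∀ r ∈ I, f r < 0)
    (η : ℝ → ℝ → ℝ)
    (hηdiff : ∀ t ∈ J, ∀ r ∈ I, DifferentiableAt ℝ (η t) r)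
    (hηrange : ∀ t ∈ J, ∀ r ∈ I, η t r ∈ Set.Ioo 0 (2 * Real.pi))
    (hηeq : ∀ t ∈ J, ∀ r ∈ I,
      η t r - Real.sin (η t r) = ((-f r) ^ ((3 : ℝ) / 2) / M r) * t)
    (R Rdot : ℝ → ℝ → ℝ)
    (hRdef : ∀ t r, R t r = (M r / (-f r)) * (1 - Real.cos (η t r)))
    (hRdotdef : ∀ t r,
      Rdot t r = Real.sqrt (-f r) * Real.sin (η t r) / (1 - Real.cos (η t r))) :
    ∀ t ∈ J, ∀ r ∈ I, 1 - Real.cos (η t r) ≠ 0 →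
      deriv (R t) r =
        (deriv M r / M r - deriv f r / f r) * R t r
          + (-t * Rdot t r) * (deriv M r / M r - (3 / 2) * (deriv f r / f r)) := by
  intro t ht r hr hc
  have hM := (hMdiff r hr).hasDerivAt
  have hf := (hfdiff r hr).hasDerivAt
  have hη := (hηdiff t ht r hr).hasDerivAt
  have hM0 : M r ≠ 0 := (hMpos r hr).ne'
  have hfr : 0 < -f r := neg_pos.mpr (hfneg r hr)
  have hR : HasDerivAt (R t) _ r :=
    ((hM.fun_div hf.fun_neg hfr.ne').fun_mul (hη.cos.const_sub 1)).congr_of_eventuallyEq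
      (Filter.Eventually.of_forall (hRdef t))
  have hleft := hη.fun_sub hη.sin
  have hright : HasDerivAt (fun x => η t x - Real.sin (η t x)) _ r :=
    (((hf.fun_neg.rpow_const (p := (3 : ℝ) / 2) (Or.inl hfr.ne')).fun_div hM hM0).mul_const
      t).congr_of_eventuallyEq
      (by filter_upwards [hI.mem_nhds hr] with x hx using hηeq t ht x hx)
  have hconstr := hleft.unique hright
  rw [hR.deriv, hRdef, hRdotdef]
  set s := Real.sqrt (-f r) with hs
  have hs0 : s ≠ 0 := (Real.sqrt_pos.mpr hfr).ne'
  have hfs : f r = -s ^ 2 := by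
    rw [hs, Real.sq_sqrt hfr.le]; ring
  have hp1 : (-f r) ^ ((3 : ℝ) / 2 - 1) = s := by
    rw [hs, Real.sqrt_eq_rpow]; norm_num
  have hp3 : (-f r) ^ ((3 : ℝ) / 2) = s ^ 3 := by
    rw [show (3 : ℝ) / 2 = (3 / 2 - 1) + 1 by norm_num, Real.rpow_add_one hfr.ne', hp1, hfs]
    ring
  rw [hp1, hp3] at hconstr
  clear_value s
  have hη' : deriv (η t) r =
      (-deriv f r * (3 / 2) * s * M r - s ^ 3 * deriv M r) / M r ^ 2 * t
        / (1 - Real.cos (η t r)) := by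
    rw [eq_div_iff hc]
    linear_combination hconstr
  rw [hη', hfs]
  field_simp
  ring
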